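/- Let β⁰ ∈ ℂ^p be s₀-sparse with support S₀, let y = Xβ⁰ + ε for some X ∈ ℂ^{n×p} and ε ∈ ℂ^n, and let δ ∈ (0,1). Suppose X/√n satisfies the restricted isometry property of order t := (36·(1+δ)/(1−δ) + 1)·s₀ with constant δ_t < δ, and suppose max_{1≤j≤p} (2/n)|⟨ε, X_j⟩| ≤ λ₀ for some λ₀ > 0. Let β̂ be the complex LASSO estimator with regularization parameter λ ≥ 2λ₀. Then (1/n)‖X(β̂ − β⁰)‖₂² + λ‖β̂ − β⁰‖₁ ≤ 4λ²s₀/(1 − δ_t); in particular, ‖β̂ − β⁰‖₁ ≤ 4λs₀/(1 − δ_t). -/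

import Mathlib

open Matrix Finset

/-- The number of nonzero entries of a vector. -/
noncomputable def sparseCount {p : ℕ} (v : Fin p → ℂ) : ℕ :=
  (Finset.univ.filter fun i => v i ≠ 0).card

/-- Squared `ℓ₂` norm of a complex vector. -/
noncomputable def l2sq {m : ℕ} (v : Fin m → ℂ) : ℝ := ∑ i, ‖v i‖ ^ 2

/-- `ℓ₁` norm of a complex vector. -/
noncomputable def l1 {m : ℕ} (v : Fin m → ℂ) : ℝ := ∑ i, ‖v i‖

/-- `A` satisfies the restricted isometry property of (real) order `s` with constant `d`:
`(1-d)‖β‖₂² ≤ ‖Aβ‖₂² ≤ (1+d)‖β‖₂²` for all vectors `β` with at most `s` nonzero entries. -/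
def RIP {n p : ℕ} (A : Matrix (Fin n) (Fin p) ℂ) (s : ℝ) (d : ℝ) : Prop :=
  ∀ β : Fin p → ℂ, (sparseCount β : ℝ) ≤ s →
    (1 - d) * l2sq β ≤ l2sq (A.mulVec β) ∧ l2sq (A.mulVec β) ≤ (1 + d) * l2sq β

/-- `b` is a complex LASSO estimator for data `y`, design `X` and parameter `lam`, i.e. a
minimizer of `β ↦ 1/(2n)‖Xβ - y‖₂² + lam ‖β‖₁`. -/
def IsLasso {n p : ℕ} (X : Matrix (Fin n) (Fin p) ℂ) (y : Fin n → ℂ) (lam : ℝ)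
    (b : Fin p → ℂ) : Prop :=
  ∀ z : Fin p → ℂ,
    1 / (2 * n) * l2sq (X.mulVec b - y) + lam * l1 b ≤
      1 / (2 * n) * l2sq (X.mulVec z - y) + lam * l1 z

/-!
Put `v = β̂ - β⁰`, let `S` be the support of `β⁰` and let `u = ‖Xv‖₂ / √n`. Comparing the objective
at `β̂` with its values on the segment from `β̂` to `β⁰` gives
`u² + λ (‖β̂‖₁ - ‖β⁰‖₁) ≤ Re ⟪ε, Xv⟫ / n`, and bounding the noise turns this into
`u² + 3/4 λ ‖v_{Sᶜ}‖₁ ≤ 5/4 λ ‖v_S‖₁`. Cutting `v_{Sᶜ}` into blocks of decreasing magnitude and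
applying the restricted isometry property to `S` with the first block, and to each of the other
blocks, yields `‖v_S‖₁ ≤ 1/3 ‖v_{Sᶜ}‖₁ + τ u` with `τ² = s₀ / (1 - δₜ)`. Four times the former
inequality and six times the latter combine to
`u² + λ ‖v‖₁ ≤ 6 λ τ u - 3 u² ≤ 3 λ² τ²`.
-/

open Filter
open scoped InnerProductSpace Topology

section GreedyBlocks

variable {ι E : Type*}

lemma sqrt_mul_sqrt_sum_sq_le {a : ι → ℝ} (ha : ∀ i, 0 ≤ a i) {B : Finset ι} {M : ℕ} {σ : ℝ}
    (hcard : #B ≤ M) (hσ : 0 ≤ σ) (hB : ∀ i ∈ B, M * a i ≤ σ) :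
    √M * √(∑ i ∈ B, a i ^ 2) ≤ σ := by
  obtain rfl | hM := M.eq_zero_or_pos
  · simpa using hσ
  have hM' : (0 : ℝ) < M := by exact_mod_cast hM
  have hsum : ∑ i ∈ B, (M * a i) ^ 2 ≤ M * σ ^ 2 := calc
    ∑ i ∈ B, (M * a i) ^ 2 ≤ #B • σ ^ 2 :=
      sum_le_card_nsmul _ _ _ fun i hi ↦ pow_le_pow_left₀ (mul_nonneg hM'.le (ha i)) (hB i hi) 2
    _ ≤ M * σ ^ 2 := by rw [nsmul_eq_mul]; gcongr
  simp only [mul_pow, ← mul_sum] at hsum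
  rw [← Real.sqrt_mul hM'.le]
  exact Real.sqrt_le_iff.2 ⟨hσ, le_of_mul_le_mul_left (by linarith) hM'⟩

lemma exists_subset_card_eq_forall_le [DecidableEq ι] (a : ι → ℝ) {T : Finset ι} {k : ℕ}
    (hk : k ≤ #T) :
    ∃ B ⊆ T, #B = k ∧ ∀ i ∈ T \ B, ∀ j ∈ B, a i ≤ a j := by
  induction k with
  | zero => exact ⟨∅, empty_subset T, rfl, by simp⟩
  | succ k ih =>
    obtain ⟨B, hBT, rfl, hB⟩ := ih (by omega)
    obtain ⟨x, hx, hmax⟩ := (T \ B).exists_max_image a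
      (card_pos.1 (by rw [card_sdiff_of_subset hBT]; omega))
    obtain ⟨hxT, hxB⟩ := mem_sdiff.1 hx
    refine ⟨insert x B, insert_subset hxT hBT, card_insert_of_notMem hxB, fun i hi j hj ↦ ?_⟩
    have hi' : i ∈ T \ B := sdiff_subset_sdiff subset_rfl (subset_insert x B) hi
    obtain rfl | hj := mem_insert.1 hj
    exacts [hmax i hi', hB i hi' j hj]

lemma exists_subset_card_eq_min_forall_mul_le_sum [DecidableEq ι] (a : ι → ℝ) (T : Finset ι)
    (M : ℕ) :
    ∃ B ⊆ T, #B = min M #T ∧ ∀ i ∈ T \ B, M * a i ≤ ∑ j ∈ B, a j := by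
  obtain ⟨B, hBT, hcard, hB⟩ := exists_subset_card_eq_forall_le a (min_le_right M #T)
  refine ⟨B, hBT, hcard, fun i hi ↦ ?_⟩
  have hlt : #B < #T := card_lt_card ⟨hBT, fun h ↦ (mem_sdiff.1 hi).2 (h (mem_sdiff.1 hi).1)⟩
  obtain rfl : #B = M := by omega
  simpa only [nsmul_eq_mul] using card_nsmul_le_sum B a (a i) (hB i hi)

variable [SeminormedAddCommGroup E] {w : ι → E} {a : ι → ℝ} {M : ℕ} {C : ℝ}

-- Peel off the `M` largest coefficients: each block is controlled by the sum over the previous one.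
lemma sqrt_mul_norm_sum_le_of_block_bound (hM : 0 < M) (hC : 0 ≤ C) (ha : ∀ i, 0 ≤ a i)
    (hw : ∀ B : Finset ι, #B ≤ M → ‖∑ i ∈ B, w i‖ ≤ C * √(∑ i ∈ B, a i ^ 2))
    (T : Finset ι) {σ : ℝ} (hσ : 0 ≤ σ) (hT : ∀ i ∈ T, M * a i ≤ σ) :
    √M * ‖∑ i ∈ T, w i‖ ≤ C * (σ + ∑ i ∈ T, a i) := by
  classical
  induction T using Finset.strongInduction generalizing σ with
  | H T ih =>
    obtain rfl | hne := T.eq_empty_or_nonempty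
    · simpa using mul_nonneg hC hσ
    obtain ⟨B, hBT, hcard, hB⟩ := exists_subset_card_eq_min_forall_mul_le_sum a T M
    have hBM : #B ≤ M := hcard.trans_le (min_le_left ..)
    have hBne : B.Nonempty := card_pos.1 (hcard ▸ lt_min hM hne.card_pos)
    have hhead : √M * ‖∑ i ∈ B, w i‖ ≤ C * σ := calc
      √M * ‖∑ i ∈ B, w i‖ ≤ √M * (C * √(∑ i ∈ B, a i ^ 2)) := by gcongr; exact hw B hBM
      _ = C * (√M * √(∑ i ∈ B, a i ^ 2)) := mul_left_comm ..
      _ ≤ C * σ := by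
        gcongr
        exact sqrt_mul_sqrt_sum_sq_le ha hBM hσ fun i hi ↦ hT i (hBT hi)
    have htail : √M * ‖∑ i ∈ T \ B, w i‖ ≤ C * (∑ i ∈ B, a i + ∑ i ∈ T \ B, a i) :=
      ih _ (sdiff_ssubset hBT hBne) (sum_nonneg fun i _ ↦ ha i) hB
    calc √M * ‖∑ i ∈ T, w i‖
        ≤ √M * (‖∑ i ∈ T \ B, w i‖ + ‖∑ i ∈ B, w i‖) := by
          rw [← sum_sdiff hBT]; gcongr; exact norm_add_le _ _
      _ ≤ C * (∑ i ∈ B, a i + ∑ i ∈ T \ B, a i) + C * σ := by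
          rw [mul_add]; exact add_le_add htail hhead
      _ = C * (σ + ∑ i ∈ T, a i) := by rw [← sum_sdiff hBT]; ring

lemma exists_block_sqrt_mul_norm_sum_sdiff_le [DecidableEq ι] (hM : 0 < M) (hC : 0 ≤ C)
    (ha : ∀ i, 0 ≤ a i)
    (hw : ∀ B : Finset ι, #B ≤ M → ‖∑ i ∈ B, w i‖ ≤ C * √(∑ i ∈ B, a i ^ 2)) (T : Finset ι) :
    ∃ B ⊆ T, #B ≤ M ∧ √M * ‖∑ i ∈ T \ B, w i‖ ≤ C * ∑ i ∈ T, a i := by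
  obtain ⟨B, hBT, hcard, hB⟩ := exists_subset_card_eq_min_forall_mul_le_sum a T M
  refine ⟨B, hBT, hcard.trans_le (min_le_left ..), ?_⟩
  rw [← sum_sdiff hBT, add_comm (∑ i ∈ T \ B, a i)]
  exact sqrt_mul_norm_sum_le_of_block_bound hM hC ha hw _ (sum_nonneg fun i _ ↦ ha i) hB

end GreedyBlocks

section RestrictedIsometry

variable (𝕜 : Type*) {ι E : Type*} [RCLike 𝕜] [SeminormedAddCommGroup E] [NormedSpace 𝕜 E]

/-- The restricted isometry property, of integer order `k` and with constant `d`, of the linear map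
`v ↦ ∑ i, v i • x i`, given by its family of columns `x`. A `k`-sparse vector is encoded by a
coefficient vector together with a finite set of at most `k` indices to which it is restricted. -/
def RestrictedIsometry (x : ι → E) (k : ℕ) (d : ℝ) : Prop :=
  ∀ (T : Finset ι) (v : ι → 𝕜), #T ≤ k →
    (1 - d) * ∑ i ∈ T, ‖v i‖ ^ 2 ≤ ‖∑ i ∈ T, v i • x i‖ ^ 2 ∧
      ‖∑ i ∈ T, v i • x i‖ ^ 2 ≤ (1 + d) * ∑ i ∈ T, ‖v i‖ ^ 2

/-- The `ℓ₁`-robust null space property of order `s`, with constants `ρ` and `τ`, of the linear map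
`v ↦ ∑ i, v i • x i`: a vector which this map nearly annihilates cannot concentrate its `ℓ₁` norm
on `s` coordinates. -/
def RobustNullSpace [Fintype ι] [DecidableEq ι] (x : ι → E) (s : ℕ) (ρ τ : ℝ) : Prop :=
  ∀ (S : Finset ι) (v : ι → 𝕜), #S ≤ s →
    ∑ i ∈ S, ‖v i‖ ≤ ρ * ∑ i ∈ Sᶜ, ‖v i‖ + τ * ‖∑ i, v i • x i‖

variable {𝕜} {x : ι → E} {k : ℕ} {d : ℝ}

namespace RestrictedIsometry

lemma norm_sum_smul_le (h : RestrictedIsometry 𝕜 x k d) {T : Finset ι} (hT : #T ≤ k) (v : ι → 𝕜) :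
    ‖∑ i ∈ T, v i • x i‖ ≤ √(1 + d) * √(∑ i ∈ T, ‖v i‖ ^ 2) := by
  rw [← Real.sqrt_mul' _ (sum_nonneg fun i _ ↦ sq_nonneg _)]
  exact Real.le_sqrt_of_sq_le (h T v hT).2

lemma sum_norm_le (h : RestrictedIsometry 𝕜 x k d) (hd : d < 1) {S T : Finset ι} (hST : S ⊆ T)
    (hT : #T ≤ k) {s : ℕ} (hS : #S ≤ s) (v : ι → 𝕜) :
    ∑ i ∈ S, ‖v i‖ ≤ √(s / (1 - d)) * ‖∑ i ∈ T, v i • x i‖ := by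
  have hd' : 0 < 1 - d := sub_pos.2 hd
  refine le_of_sq_le_sq ?_ (by positivity)
  calc (∑ i ∈ S, ‖v i‖) ^ 2 ≤ #S * ∑ i ∈ S, ‖v i‖ ^ 2 := sq_sum_le_card_mul_sum_sq
    _ ≤ s * ∑ i ∈ T, ‖v i‖ ^ 2 := by gcongr
    _ = s / (1 - d) * ((1 - d) * ∑ i ∈ T, ‖v i‖ ^ 2) := by field_simp
    _ ≤ s / (1 - d) * ‖∑ i ∈ T, v i • x i‖ ^ 2 := by gcongr; exact (h T v hT).1
    _ = (√(s / (1 - d)) * ‖∑ i ∈ T, v i • x i‖) ^ 2 := by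
      rw [mul_pow, Real.sq_sqrt (by positivity)]

lemma exists_block_mul_norm_sum_sdiff_le [DecidableEq ι] (h : RestrictedIsometry 𝕜 x k d) {M : ℕ}
    (hM : 0 < M) (hMk : M ≤ k) {ρ τ : ℝ} (hτ : 0 ≤ τ) (hτρ : τ * √(1 + d) ≤ ρ * √M) (v : ι → 𝕜)
    (T : Finset ι) :
    ∃ B ⊆ T, #B ≤ M ∧ τ * ‖∑ i ∈ T \ B, v i • x i‖ ≤ ρ * ∑ i ∈ T, ‖v i‖ := by
  obtain ⟨B, hBT, hBM, htail⟩ := exists_block_sqrt_mul_norm_sum_sdiff_le hM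
    (Real.sqrt_nonneg (1 + d)) (fun i ↦ norm_nonneg (v i))
    (fun B hB ↦ h.norm_sum_smul_le (hB.trans hMk) v) T
  have hsqrt : 0 < √(M : ℝ) := Real.sqrt_pos.2 (Nat.cast_pos.2 hM)
  refine ⟨B, hBT, hBM, le_of_mul_le_mul_left ?_ hsqrt⟩
  calc √M * (τ * ‖∑ i ∈ T \ B, v i • x i‖)
      = τ * (√M * ‖∑ i ∈ T \ B, v i • x i‖) := mul_left_comm ..
    _ ≤ τ * (√(1 + d) * ∑ i ∈ T, ‖v i‖) := by gcongr
    _ = τ * √(1 + d) * ∑ i ∈ T, ‖v i‖ := (mul_assoc ..).symm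
    _ ≤ ρ * √M * ∑ i ∈ T, ‖v i‖ := by gcongr
    _ = √M * (ρ * ∑ i ∈ T, ‖v i‖) := by ring

theorem robustNullSpace [Fintype ι] [DecidableEq ι] {M s : ℕ} {ρ : ℝ}
    (h : RestrictedIsometry 𝕜 x (M + s) d) (hd : d < 1) (hρ : 0 ≤ ρ)
    (hM : s * (1 + d) ≤ ρ ^ 2 * (1 - d) * M) :
    RobustNullSpace 𝕜 x s ρ √(s / (1 - d)) := by
  intro S v hS
  have hd' : 0 < 1 - d := sub_pos.2 hd
  set τ := √(s / (1 - d))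
  have hτ : τ * √(1 + d) ≤ ρ * √M := by
    rw [← Real.sqrt_mul (by positivity), ← Real.sqrt_sq hρ, ← Real.sqrt_mul (sq_nonneg ρ)]
    apply Real.sqrt_le_sqrt
    rw [div_mul_eq_mul_div, div_le_iff₀ hd']
    linarith
  obtain rfl | hM0 := M.eq_zero_or_pos
  · have hτ0 : τ * √(1 + d) ≤ 0 := by simpa using hτ
    have hsum : ∑ i ∈ S, ‖v i‖ ≤ 0 := calc
      ∑ i ∈ S, ‖v i‖ ≤ τ * ‖∑ i ∈ S, v i • x i‖ :=
        h.sum_norm_le hd subset_rfl (hS.trans (by omega)) hS v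
      _ ≤ τ * (√(1 + d) * √(∑ i ∈ S, ‖v i‖ ^ 2)) := by
        gcongr
        exact h.norm_sum_smul_le (hS.trans (by omega)) v
      _ = τ * √(1 + d) * √(∑ i ∈ S, ‖v i‖ ^ 2) := (mul_assoc ..).symm
      _ ≤ 0 := mul_nonpos_of_nonpos_of_nonneg hτ0 (Real.sqrt_nonneg _)
    exact hsum.trans (by positivity)
  obtain ⟨B, -, hBM, htail⟩ := h.exists_block_mul_norm_sum_sdiff_le hM0 (Nat.le_add_right M s)
    (Real.sqrt_nonneg _) hτ v Sᶜ
  have hsplit : ∑ i ∈ S ∪ B, v i • x i = ∑ i, v i • x i - ∑ i ∈ Sᶜ \ B, v i • x i := by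
    have hcompl : S ∪ B = (Sᶜ \ B)ᶜ := by ext; simp [or_iff_not_imp_left]
    rw [hcompl, eq_sub_iff_add_eq, sum_compl_add_sum]
  calc ∑ i ∈ S, ‖v i‖ ≤ τ * ‖∑ i ∈ S ∪ B, v i • x i‖ :=
        h.sum_norm_le hd subset_union_left ((card_union_le S B).trans (by omega)) hS v
    _ ≤ τ * (‖∑ i, v i • x i‖ + ‖∑ i ∈ Sᶜ \ B, v i • x i‖) := by
        rw [hsplit]; gcongr; exact norm_sub_le _ _
    _ ≤ ρ * ∑ i ∈ Sᶜ, ‖v i‖ + τ * ‖∑ i, v i • x i‖ := by linarith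

end RestrictedIsometry

end RestrictedIsometry

lemma sum_compl_norm_sub_sub_sum_norm_sub_le {ι E : Type*} [Fintype ι] [DecidableEq ι]
    [SeminormedAddCommGroup E] (b : ι → E) {z : ι → E} {S : Finset ι} (hz : ∀ i ∉ S, z i = 0) :
    ∑ i ∈ Sᶜ, ‖(b - z) i‖ - ∑ i ∈ S, ‖(b - z) i‖ ≤ ∑ i, ‖b i‖ - ∑ i, ‖z i‖ := by
  have hcompl : ∑ i ∈ Sᶜ, (‖(b - z) i‖ + ‖z i‖) = ∑ i ∈ Sᶜ, ‖b i‖ :=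
    sum_congr rfl fun i hi ↦ by simp [hz i (mem_compl.1 hi)]
  have hS : ∑ i ∈ S, ‖z i‖ ≤ ∑ i ∈ S, (‖b i‖ + ‖(b - z) i‖) :=
    sum_le_sum fun i _ ↦ norm_le_norm_add_norm_sub (b i) (z i)
  rw [sum_add_distrib] at hcompl hS
  rw [← sum_add_sum_compl S fun i ↦ ‖b i‖, ← sum_add_sum_compl S fun i ↦ ‖z i‖]
  linarith

lemma convexOn_sum_norm {ι : Type*} [Fintype ι] (E : Type*) [SeminormedAddCommGroup E]
    [NormedSpace ℝ E] : ConvexOn ℝ Set.univ fun v : ι → E ↦ ∑ i, ‖v i‖ := by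
  simpa [Function.comp_def, PiLp.norm_eq_of_L1] using
    (convexOn_norm convex_univ).comp_linearMap (WithLp.linearEquiv 1 ℝ (ι → E)).symm.toLinearMap

section Lasso

variable {𝕜 ι H V : Type*} [RCLike 𝕜] [SeminormedAddCommGroup H] [InnerProductSpace 𝕜 H]

lemma re_inner_add_sub_nonneg_of_isMinOn [AddCommGroup V] [Module 𝕜 V] [Module ℝ V]
    [IsScalarTower ℝ 𝕜 V] {g : V → ℝ} (hg : ConvexOn ℝ Set.univ g) (L : V →ₗ[𝕜] H) {y : H} {b : V}
    (hb : IsMinOn (fun v ↦ 1 / 2 * ‖L v - y‖ ^ 2 + g v) Set.univ b) (z : V) :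
    0 ≤ RCLike.re ⟪L b - y, L (z - b)⟫_𝕜 + (g z - g b) := by
  set q := RCLike.re ⟪L b - y, L (z - b)⟫_𝕜
  set r := ‖L (z - b)‖ ^ 2
  have hsegment (t : ℝ) (ht₀ : 0 < t) (ht₁ : t ≤ 1) : 0 ≤ q + (g z - g b) + t * (r / 2) := by
    have hmin := isMinOn_univ_iff.1 hb (b + t • (z - b))
    have hconv : g (b + t • (z - b)) ≤ (1 - t) * g b + t * g z := by
      have := hg.2 (Set.mem_univ b) (Set.mem_univ z) (sub_nonneg.2 ht₁) ht₀.le (by ring)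
      rwa [show (1 - t) • b + t • z = b + t • (z - b) by module] at this
    have hsq : ‖L (b + t • (z - b)) - y‖ ^ 2 = ‖L b - y‖ ^ 2 + 2 * (t * q) + t ^ 2 * r := by
      rw [RCLike.real_smul_eq_coe_smul (K := 𝕜) t (z - b), map_add, map_smul, add_sub_right_comm,
        norm_add_sq (𝕜 := 𝕜), inner_smul_right, RCLike.re_ofReal_mul, norm_smul,
        RCLike.norm_ofReal, mul_pow, sq_abs]
    rw [hsq] at hmin
    refine nonneg_of_mul_nonneg_right ?_ ht₀
    linarith
  have hlim : Tendsto (fun t ↦ q + (g z - g b) + t * (r / 2)) (𝓝[>] 0) (𝓝 (q + (g z - g b))) :=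
    (Continuous.tendsto' (by fun_prop) _ _ (by ring)).mono_left nhdsWithin_le_nhds
  refine ge_of_tendsto hlim ?_
  filter_upwards [Ioc_mem_nhdsGT one_pos] with t ht using hsegment t ht.1 ht.2

lemma re_inner_sum_smul_le [Fintype ι] {x : ι → H} {e : H} {c : ℝ} (h : ∀ i, ‖⟪e, x i⟫_𝕜‖ ≤ c)
    (v : ι → 𝕜) : RCLike.re ⟪e, ∑ i, v i • x i⟫_𝕜 ≤ c * ∑ i, ‖v i‖ := by
  simp only [inner_sum, inner_smul_right, map_sum, mul_sum]
  refine sum_le_sum fun i _ ↦ (RCLike.re_le_norm _).trans ?_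
  rw [norm_mul, mul_comm]
  gcongr
  exact h i

/-- The objective minimised by the LASSO estimator for the design with columns `x`, the data `y` and
the regularization parameter `lam`. The factor `1 / n` of the loss is absorbed in `x` and `y`. -/
noncomputable def lassoObjective [Fintype ι] (x : ι → H) (y : H) (lam : ℝ) (v : ι → 𝕜) : ℝ :=
  1 / 2 * ‖∑ i, v i • x i - y‖ ^ 2 + lam * ∑ i, ‖v i‖

variable [Fintype ι] {x : ι → H} {e : H} {lam : ℝ} {b z : ι → 𝕜}

lemma norm_sq_add_le_re_inner_of_isMinOn_lassoObjective (hlam : 0 ≤ lam)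
    (hb : IsMinOn (lassoObjective x (∑ i, z i • x i + e) lam) Set.univ b) :
    ‖∑ i, (b - z) i • x i‖ ^ 2 + lam * (∑ i, ‖b i‖ - ∑ i, ‖z i‖)
      ≤ RCLike.re ⟪e, ∑ i, (b - z) i • x i⟫_𝕜 := by
  set L := Fintype.linearCombination 𝕜 x
  have hvar := re_inner_add_sub_nonneg_of_isMinOn ((convexOn_sum_norm 𝕜).smul hlam) L hb z
  have hres : L b - (L z + e) = L (b - z) - e := by rw [map_sub]; abel
  change 0 ≤ RCLike.re ⟪L b - (L z + e), L (z - b)⟫_𝕜 + _ at hvar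
  change ‖L (b - z)‖ ^ 2 + _ ≤ RCLike.re ⟪e, L (b - z)⟫_𝕜
  rw [hres, ← neg_sub b z, map_neg, inner_neg_right, inner_sub_left, map_neg, map_sub,
    inner_self_eq_norm_sq, smul_eq_mul, smul_eq_mul] at hvar
  linarith

theorem RobustNullSpace.lasso_oracle [DecidableEq ι] {s : ℕ} {τ : ℝ} {S : Finset ι}
    (hx : RobustNullSpace 𝕜 x s (1 / 3) τ) (hS : #S ≤ s) (hz : ∀ i ∉ S, z i = 0)
    (he : ∀ i, ‖⟪e, x i⟫_𝕜‖ ≤ lam / 4) (hlam : 0 ≤ lam)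
    (hb : IsMinOn (lassoObjective x (∑ i, z i • x i + e) lam) Set.univ b) :
    ‖∑ i, (b - z) i • x i‖ ^ 2 + lam * ∑ i, ‖(b - z) i‖ ≤ 3 * (lam * τ) ^ 2 := by
  have hbasic := norm_sq_add_le_re_inner_of_isMinOn_lassoObjective hlam hb
  have hnoise := re_inner_sum_smul_le he (b - z)
  have hl1 := mul_le_mul_of_nonneg_left (sum_compl_norm_sub_sub_sum_norm_sub_le b hz) hlam
  have hnull := mul_le_mul_of_nonneg_left (hx S (b - z) hS) hlam
  rw [← sum_add_sum_compl S fun i ↦ ‖(b - z) i‖] at hnoise ⊢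
  set u := ‖∑ i, (b - z) i • x i‖
  set α := ∑ i ∈ S, ‖(b - z) i‖
  set γ := ∑ i ∈ Sᶜ, ‖(b - z) i‖
  have hcone : u ^ 2 + 3 / 4 * (lam * γ) ≤ 5 / 4 * (lam * α) := by linarith
  calc u ^ 2 + lam * (α + γ) ≤ 6 * (lam * α) - 2 * (lam * γ) - 3 * u ^ 2 := by linarith [hcone]
    _ ≤ 6 * (lam * τ * u) - 3 * u ^ 2 := by linarith
    _ ≤ 3 * (lam * τ) ^ 2 := by linarith [sq_nonneg (lam * τ - u)]

theorem lasso_oracle_l1_general {M s : ℕ} {d : ℝ} {S : Finset ι}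
    (hx : RestrictedIsometry 𝕜 x (M + s) d) (hd : d < 1) (hM : 9 * (s * (1 + d)) ≤ (1 - d) * M)
    (hS : #S ≤ s) (hz : ∀ i ∉ S, z i = 0) (he : ∀ i, ‖⟪e, x i⟫_𝕜‖ ≤ lam / 4) (hlam : 0 ≤ lam)
    (hb : IsMinOn (lassoObjective x (∑ i, z i • x i + e) lam) Set.univ b) :
    ‖∑ i, (b - z) i • x i‖ ^ 2 + lam * ∑ i, ‖(b - z) i‖ ≤ 3 * lam ^ 2 * s / (1 - d) := by
  classical
  have hnull : RobustNullSpace 𝕜 x s (1 / 3) √(s / (1 - d)) :=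
    hx.robustNullSpace hd (by norm_num) (by linarith)
  refine (hnull.lasso_oracle hS hz he hlam hb).trans_eq ?_
  rw [mul_pow, Real.sq_sqrt (div_nonneg s.cast_nonneg (sub_pos.2 hd).le)]
  ring

end Lasso

section Matrix

variable {n p : ℕ}

/-- The `j`-th column of a complex matrix, as a vector of Euclidean space. -/
noncomputable def euclideanCol (A : Matrix (Fin n) (Fin p) ℂ) (j : Fin p) :
    EuclideanSpace ℂ (Fin n) :=
  WithLp.toLp 2 (A.col j)

lemma sum_smul_euclideanCol (A : Matrix (Fin n) (Fin p) ℂ) (v : Fin p → ℂ) :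
    ∑ j, v j • euclideanCol A j = WithLp.toLp 2 (A *ᵥ v) := by
  ext i
  simp [euclideanCol, Matrix.mulVec, dotProduct, mul_comm]

lemma norm_toLp_sq {m : ℕ} (v : Fin m → ℂ) : ‖WithLp.toLp 2 v‖ ^ 2 = l2sq v :=
  EuclideanSpace.norm_sq_eq _

lemma RIP.restrictedIsometry {A : Matrix (Fin n) (Fin p) ℂ} {t d : ℝ} {k : ℕ} (h : RIP A t d)
    (hk : k ≤ t) : RestrictedIsometry ℂ (euclideanCol A) k d := by
  intro T v hT
  set β : Fin p → ℂ := fun i ↦ if i ∈ T then v i else 0 with hβ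
  have hsparse : sparseCount β ≤ #T := card_le_card fun i hi ↦ by
    by_contra hiT
    simp [hβ, hiT] at hi
  have hl2 : l2sq β = ∑ i ∈ T, ‖v i‖ ^ 2 := by
    simp [l2sq, hβ, apply_ite, ite_pow]
  have hmul : ‖∑ i ∈ T, v i • euclideanCol A i‖ ^ 2 = l2sq (A *ᵥ β) := by
    rw [← norm_toLp_sq, ← sum_smul_euclideanCol]
    simp [hβ, ite_smul]
  rw [← hl2, hmul]
  exact h β (le_trans (by exact_mod_cast hsparse.trans hT) hk)

lemma l2sq_inv_sqrt_smul {m : ℕ} (v : Fin m → ℂ) :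
    l2sq (((√n : ℝ) : ℂ)⁻¹ • v) = 1 / n * l2sq v := by
  simp [l2sq, mul_sum, mul_pow]

lemma IsLasso.isMinOn_lassoObjective {X : Matrix (Fin n) (Fin p) ℂ} {y : Fin n → ℂ} {lam : ℝ}
    {b : Fin p → ℂ} (hb : IsLasso X y lam b) :
    IsMinOn (lassoObjective (euclideanCol (((√n : ℝ) : ℂ)⁻¹ • X))
      (WithLp.toLp 2 (((√n : ℝ) : ℂ)⁻¹ • y)) lam) Set.univ b := by
  have hobj (v : Fin p → ℂ) : lassoObjective (euclideanCol (((√n : ℝ) : ℂ)⁻¹ • X))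
      (WithLp.toLp 2 (((√n : ℝ) : ℂ)⁻¹ • y)) lam v
        = 1 / (2 * n) * l2sq (X *ᵥ v - y) + lam * l1 v := by
    rw [lassoObjective, sum_smul_euclideanCol, Matrix.smul_mulVec, ← WithLp.toLp_sub, ← smul_sub,
      norm_toLp_sq, l2sq_inv_sqrt_smul, l1]
    ring
  exact isMinOn_univ_iff.2 fun z ↦ by simpa only [hobj] using hb z

lemma norm_inner_inv_sqrt_smul_euclideanCol (X : Matrix (Fin n) (Fin p) ℂ) (e : Fin n → ℂ)
    (j : Fin p) :
    ‖⟪WithLp.toLp 2 (((√n : ℝ) : ℂ)⁻¹ • e), euclideanCol (((√n : ℝ) : ℂ)⁻¹ • X) j⟫_ℂ‖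
      = 1 / n * ‖∑ k, (starRingEnd ℂ) (e k) * X k j‖ := by
  have hcol : euclideanCol (((√n : ℝ) : ℂ)⁻¹ • X) j = ((√n : ℝ) : ℂ)⁻¹ • euclideanCol X j := rfl
  have hinner : ⟪WithLp.toLp 2 e, euclideanCol X j⟫_ℂ = ∑ k, (starRingEnd ℂ) (e k) * X k j := by
    simp [euclideanCol, PiLp.inner_apply, mul_comm]
  rw [hcol, WithLp.toLp_smul, inner_smul_left, inner_smul_right, hinner, norm_mul, norm_mul]
  simp [← mul_assoc, ← mul_inv]

theorem IsLasso.l2sq_add_l1_le {X : Matrix (Fin n) (Fin p) ℂ} {β0 b : Fin p → ℂ} {e : Fin n → ℂ}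
    {lam t d : ℝ} {M s : ℕ} (hb : IsLasso X (X *ᵥ β0 + e) lam b) (hβ0 : sparseCount β0 ≤ s)
    (hX : RIP (((√n : ℝ) : ℂ)⁻¹ • X) t d) (hd : d < 1) (ht : (M + s : ℕ) ≤ t)
    (hM : 9 * (s * (1 + d)) ≤ (1 - d) * M) (hlam : 0 ≤ lam)
    (he : ∀ j, 2 / n * ‖∑ k, (starRingEnd ℂ) (e k) * X k j‖ ≤ lam / 2) :
    1 / n * l2sq (X *ᵥ (b - β0)) + lam * l1 (b - β0) ≤ 3 * lam ^ 2 * s / (1 - d) := by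
  have hoff : ∀ i ∉ univ.filter (fun i ↦ β0 i ≠ 0), β0 i = 0 := by simp
  have hcorr (j : Fin p) : ‖⟪WithLp.toLp 2 (((√n : ℝ) : ℂ)⁻¹ • e),
      euclideanCol (((√n : ℝ) : ℂ)⁻¹ • X) j⟫_ℂ‖ ≤ lam / 4 := calc
    _ = 2 / n * ‖∑ k, (starRingEnd ℂ) (e k) * X k j‖ / 2 := by
      rw [norm_inner_inv_sqrt_smul_euclideanCol]; ring
    _ ≤ lam / 2 / 2 := by gcongr; exact he j
    _ = lam / 4 := by ring
  have hmin := hb.isMinOn_lassoObjective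
  rw [smul_add, WithLp.toLp_add, ← Matrix.smul_mulVec, ← sum_smul_euclideanCol] at hmin
  have horacle := lasso_oracle_l1_general (hX.restrictedIsometry ht) hd hM hβ0 hoff
    hcorr hlam hmin
  rwa [sum_smul_euclideanCol, norm_toLp_sq, Matrix.smul_mulVec, l2sq_inv_sqrt_smul] at horacle

end Matrix

lemma exists_nat_mul_le_and_add_le (s : ℕ) {δ d : ℝ} (hδ : δ ∈ Set.Ioo (0 : ℝ) 1) (hd : d < δ) :
    ∃ M : ℕ, 9 * (s * (1 + d)) ≤ (1 - d) * M ∧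
      ((M + s : ℕ) : ℝ) ≤ (36 * (1 + δ) / (1 - δ) + 1) * s := by
  have hδ' : 0 < 1 - δ := sub_pos.2 hδ.2
  set κ := (1 + δ) / (1 - δ)
  have hκ : 1 ≤ κ := (one_le_div hδ').2 (by linarith [hδ.1])
  have hdκ : 1 + d ≤ (1 - d) * κ := calc
    1 + d ≤ 1 + δ := by linarith
    _ = (1 - δ) * κ := (mul_div_cancel₀ _ hδ'.ne').symm
    _ ≤ (1 - d) * κ := by gcongr
  have hceil : (⌈κ⌉₊ : ℝ) ≤ 2 * κ := by linarith [Nat.ceil_lt_add_one (zero_le_one.trans hκ)]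
  refine ⟨9 * (⌈κ⌉₊ * s), ?_, ?_⟩
  · have hd' : 0 ≤ 1 - d := by linarith
    push_cast
    calc 9 * (s * (1 + d)) ≤ 9 * (s * ((1 - d) * ⌈κ⌉₊)) := by
          gcongr
          exact hdκ.trans (by gcongr; exact Nat.le_ceil κ)
      _ = (1 - d) * (9 * (⌈κ⌉₊ * s)) := by ring
  · push_cast
    calc (9 * (⌈κ⌉₊ * s) + s : ℝ) ≤ 9 * (2 * κ * s) + s := by gcongr
      _ ≤ (36 * κ + 1) * s := by linarith [mul_nonneg (zero_le_one.trans hκ) s.cast_nonneg]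
      _ = (36 * (1 + δ) / (1 - δ) + 1) * s := by rw [mul_div_assoc]

/-- Let `β⁰ ∈ ℂᵖ` be `s₀`-sparse, `y = Xβ⁰ + ε`, and `δ ∈ (0,1)`. Suppose
`X/√n` satisfies the RIP of order `t := (36(1+δ)/(1-δ)+1)s₀` with constant `δₜ < δ`, and
`max_j (2/n)|⟨ε, Xⱼ⟩| ≤ λ₀` for some `λ₀ > 0`. Let `β̂` be the complex LASSO estimator with
regularization parameter `λ ≥ 2λ₀`. Then
`(1/n)‖X(β̂-β⁰)‖₂² + λ‖β̂-β⁰‖₁ ≤ 4λ²s₀/(1-δₜ)`; in particular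
`‖β̂-β⁰‖₁ ≤ 4λs₀/(1-δₜ)`. -/
theorem lasso_oracle_l1
    {n p : ℕ} (hn : 0 < n)
    (X : Matrix (Fin n) (Fin p) ℂ) (β0 : Fin p → ℂ) (ε y : Fin n → ℂ)
    (s0 : ℕ) (hs0 : sparseCount β0 ≤ s0)
    (hy : y = X.mulVec β0 + ε)
    (δ δt : ℝ) (hδ : δ ∈ Set.Ioo (0 : ℝ) 1) (hδt : δt < δ)
    (hRIP : RIP ((((Real.sqrt n : ℝ) : ℂ))⁻¹ • X)
      ((36 * (1 + δ) / (1 - δ) + 1) * s0) δt)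
    (lam0 : ℝ) (hlam0 : 0 < lam0)
    (hnoise : ∀ j : Fin p, 2 / (n : ℝ) * ‖∑ k, (starRingEnd ℂ) (ε k) * X k j‖ ≤ lam0)
    (lam : ℝ) (hlam : 2 * lam0 ≤ lam)
    (βhat : Fin p → ℂ) (hβhat : IsLasso X y lam βhat) :
    1 / (n : ℝ) * l2sq (X.mulVec (βhat - β0)) + lam * l1 (βhat - β0) ≤
        4 * lam ^ 2 * s0 / (1 - δt) ∧
      l1 (βhat - β0) ≤ 4 * lam * s0 / (1 - δt) := by
  have hlam_pos : 0 < lam := by linarith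
  have hδt' : 0 < 1 - δt := by linarith [hδ.2]
  suffices hmain : 1 / (n : ℝ) * l2sq (X.mulVec (βhat - β0)) + lam * l1 (βhat - β0) ≤
      4 * lam ^ 2 * s0 / (1 - δt) by
    refine ⟨hmain, le_of_mul_le_mul_left ?_ hlam_pos⟩
    have hpred : 0 ≤ 1 / (n : ℝ) * l2sq (X.mulVec (βhat - β0)) := by
      rw [← norm_toLp_sq]; positivity
    calc lam * l1 (βhat - β0) ≤ 4 * lam ^ 2 * s0 / (1 - δt) := by linarith
      _ = lam * (4 * lam * s0 / (1 - δt)) := by ring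
  subst hy
  obtain ⟨M, hM, hMt⟩ := exists_nat_mul_le_and_add_le s0 hδ hδt
  refine (hβhat.l2sq_add_l1_le hs0 hRIP (hδt.trans hδ.2) hMt hM hlam_pos.le fun j ↦
    (hnoise j).trans (by linarith)).trans ?_
  gcongr
  norm_num
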